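/- arXiv:1210.2472 — 3 statements merged into one kernel-verified Lean document; each statement's English description precedes it below -/
import Mathlib

section
/- Let p be an odd prime and let u denote 1+p regarded as a unit of the ring ℤ_p of p-adic integers. Let k be a nonzero integer written as k = p^s·m with s a natural number and m an integer not divisible by p. Then ‖((u^((p-1)·k) : ℤ_pˣ) : ℤ_p) − 1‖ = p^{−(s+1)}, where u^((p-1)·k) denotes the integer power (zpow) of the unit u; equivalently, the ideal of ℤ_p generated by (u^((p-1)·k) : ℤ_p) − 1 equals the ideal generated by p^{s+1}. -/
/-!
For a natural exponent this is lifting the exponent in `ℤ_p` itself: raising `x ≡ 1 mod p` to a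
power prime to `p` does not change the multiplicity of `p` in `x - 1`, and, `p` being odd, raising
to the `p`-th power increases it by one. As `(1 + p) - 1 = p` has multiplicity one and `p - 1` is
prime to `p`, the exponent `(p - 1) p ^ s |m|` gives multiplicity `s + 1`. The sign of `m` is
irrelevant, since `v⁻¹ - 1 = -v⁻¹ (v - 1)` and units have norm one.
-/

lemma PadicInt.norm_eq_of_emultiplicity {p : ℕ} [Fact p.Prime] {z : ℤ_[p]} {n : ℕ}
    (h : emultiplicity (p : ℤ_[p]) z = n) : ‖z‖ = (p : ℝ) ^ (-(n : ℤ)) := by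
  obtain ⟨⟨c, rfl⟩, hn⟩ := emultiplicity_eq_coe.mp h
  have hc : ‖c‖ = 1 := by
    refine le_antisymm (PadicInt.norm_le_one c) (not_lt.mp fun hlt => hn ?_)
    rw [pow_succ]
    exact mul_dvd_mul_left _ ((PadicInt.norm_lt_one_iff_dvd c).mp hlt)
  rw [norm_mul, hc, mul_one, PadicInt.norm_p_pow]

lemma PadicInt.norm_units_inv_sub_one {p : ℕ} [Fact p.Prime] (v : ℤ_[p]ˣ) :
    ‖((v⁻¹ : ℤ_[p]ˣ) : ℤ_[p]) - 1‖ = ‖(v : ℤ_[p]) - 1‖ := by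
  have h : ((v⁻¹ : ℤ_[p]ˣ) : ℤ_[p]) - 1 = -(((v⁻¹ : ℤ_[p]ˣ) : ℤ_[p]) * ((v : ℤ_[p]) - 1)) := by
    rw [mul_sub, Units.inv_mul]; ring
  rw [h, norm_neg, norm_mul, PadicInt.norm_units, one_mul]

lemma PadicInt.norm_one_add_p_pow_sub_one {p : ℕ} [Fact p.Prime] (hodd : Odd p) (s : ℕ) {n : ℕ}
    (hn : ¬ p ∣ n) :
    ‖(1 + (p : ℤ_[p])) ^ (p ^ s * n) - 1‖ = (p : ℝ) ^ (-(s + 1 : ℤ)) := by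
  have hp : Prime (p : ℤ_[p]) := PadicInt.prime_p
  have hxy : (p : ℤ_[p]) ∣ (1 + p) - 1 := by simp
  have hx : ¬ (p : ℤ_[p]) ∣ 1 + p := fun h =>
    hp.not_dvd_one ((dvd_add_left (dvd_refl _)).mp h)
  have hn' : ¬ (p : ℤ_[p]) ∣ n := by
    rwa [← PadicInt.norm_lt_one_iff_dvd, PadicInt.norm_natCast_lt_one_iff]
  have key : emultiplicity (p : ℤ_[p]) ((1 + (p : ℤ_[p])) ^ (p ^ s * n) - 1)
      = ((s + 1 : ℕ) : ℕ∞) := by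
    have h1 := emultiplicity_pow_prime_pow_sub_pow_prime_pow hp hodd hxy hx s
    have h2 := emultiplicity_pow_sub_pow_of_prime hp (x := (1 + (p : ℤ_[p])) ^ p ^ s)
      (y := 1 ^ p ^ s) (hxy.trans (sub_dvd_pow_sub_pow _ _ _))
      (fun h => hx (hp.dvd_of_dvd_pow h)) hn'
    have h3 : emultiplicity (p : ℤ_[p]) p = 1 :=
      (FiniteMultiplicity.of_prime_left hp hp.ne_zero).emultiplicity_self
    rw [h1, add_sub_cancel_left, h3, one_pow, one_pow, ← pow_mul] at h2
    rw [h2]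
    push_cast
    exact add_comm _ _
  simpa using PadicInt.norm_eq_of_emultiplicity key

/-- Let `p` be an odd prime and `u` the unit `1+p` of `ℤ_p`.  For a nonzero integer
`k = p^s·m` with `p ∤ m`, the norm of `u^((p-1)·k) − 1` is `p^{-(s+1)}`. -/
theorem stmt1 (p : ℕ) [Fact p.Prime] (hodd : Odd p) (u : ℤ_[p]ˣ)
    (hu : (u : ℤ_[p]) = 1 + p) (k : ℤ) (hk : k ≠ 0) (s : ℕ) (m : ℤ)
    (hkm : k = (p : ℤ) ^ s * m) (hm : ¬ (p : ℤ) ∣ m) :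
    ‖((u ^ (((p : ℤ) - 1) * k) : ℤ_[p]ˣ) : ℤ_[p]) - 1‖ = (p : ℝ) ^ (-(s + 1 : ℤ)) := by
  have hp : p.Prime := Fact.out
  have hn : ¬ p ∣ (p - 1) * m.natAbs := by
    intro h
    rcases hp.dvd_mul.mp h with h | h
    · exact Nat.not_dvd_of_pos_of_lt (Nat.sub_pos_of_lt hp.one_lt) (Nat.sub_lt hp.pos one_pos) h
    · exact hm (Int.natCast_dvd.mpr h)
  have main := PadicInt.norm_one_add_p_pow_sub_one hodd s hn
  rw [← hu, ← Units.val_pow_eq_pow_val, ← zpow_natCast] at main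
  have hcast : ((p ^ s * ((p - 1) * m.natAbs) : ℕ) : ℤ)
      = (p : ℤ) ^ s * (((p : ℤ) - 1) * (m.natAbs : ℤ)) := by
    push_cast [Nat.cast_sub hp.one_le]
    ring
  rw [hcast] at main
  rcases Int.natAbs_eq m with h | h
  · rw [← main, hkm, ← h]
    ring_nf
  · rw [← main, ← PadicInt.norm_units_inv_sub_one, ← zpow_neg, hkm, h, Int.natAbs_neg,
      Int.natAbs_natCast]
    ring_nf
end

section
/- Let p be an odd prime, g ∈ ℤ_pˣ a topological generator, K a commutative ring of characteristic p (i.e., (p : K) = 0) equipped with the discrete topology, and γ ∈ K with γ^{p−1} = 1. Then the K-linear map T on C(ℤ_pˣ, K) defined by (T f)(x) = f(g·x) − γ·f(x) is surjective. -/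
/-!
The function `h` to be hit is locally constant on a compact group, so it factors through
`(ℤ/pⁿ)ˣ`, whose order is `N = φ(pⁿ)`; since `g` maps to a generator of this group, the sequence
`a k = h (g ^ k)` is `N`-periodic. Solve the recursion `F (k + 1) = γ * F k + a k`, `F 0 = 0`.
As `p - 1 ∣ N`, we have `γ ^ N = 1`, and going once around changes `F` by `γ ^ k * F N`
(`recSol_add_period`). Going around `p` times therefore changes `F` by a multiple of `p`,
which is zero in `K`, so `F` is periodic with period `p * N = φ(pⁿ⁺¹)` (`recSol_periodic`).
This is exactly the order of `g` in `(ℤ/pⁿ⁺¹)ˣ`, hence `g ^ k ↦ F k` is a well-defined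
function on `(ℤ/pⁿ⁺¹)ˣ`, and its pullback to `ℤ_pˣ` is the required preimage of `h`.
-/

/-- The solution of the recursion `F (k + 1) = γ * F k + a k` with `F 0 = 0`. -/
def recSol {K : Type*} [CommRing K] (γ : K) (a : ℕ → K) : ℕ → K
  | 0 => 0
  | k + 1 => γ * recSol γ a k + a k

lemma recSol_add_period {K : Type*} [CommRing K] (γ : K) (a : ℕ → K) (N : ℕ)
    (ha : ∀ k, a (k + N) = a k) (k : ℕ) :
    recSol γ a (k + N) = recSol γ a k + γ ^ k * recSol γ a N := by
  induction k with
  | zero => simp [recSol]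
  | succ k ih =>
    rw [show k + 1 + N = (k + N) + 1 by ring, recSol, recSol, ih, ha]
    ring

lemma recSol_periodic {K : Type*} [CommRing K] (γ : K) (a : ℕ → K) (N p : ℕ)
    (ha : ∀ k, a (k + N) = a k) (hγ : γ ^ N = 1) (hp : (p : K) = 0) :
    Function.Periodic (recSol γ a) (p * N) := by
  have key : ∀ j k : ℕ, recSol γ a (k + j * N) = recSol γ a k + j * (γ ^ k * recSol γ a N) := by
    intro j k
    induction j with
    | zero => simp
    | succ j ih =>
      rw [show k + (j + 1) * N = (k + j * N) + N by ring, recSol_add_period γ a N ha, ih,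
        pow_add, mul_comm j N, pow_mul, hγ, one_pow]
      push_cast
      ring
  intro k
  rw [key, hp, zero_mul, add_zero]

lemma toZModPow_eq_iff (p : ℕ) [Fact p.Prime] (n : ℕ) (x y : ℤ_[p]) :
    PadicInt.toZModPow n x = PadicInt.toZModPow n y ↔ ‖x - y‖ ≤ (p : ℝ) ^ (-n : ℤ) := by
  rw [PadicInt.norm_le_pow_iff_mem_span_pow, ← PadicInt.ker_toZModPow, RingHom.mem_ker, map_sub,
    sub_eq_zero]

/-- Reduction of units `ℤ_pˣ → (ℤ/pⁿ)ˣ`. -/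
noncomputable def unitsRed (p : ℕ) [Fact p.Prime] (n : ℕ) : ℤ_[p]ˣ →* (ZMod (p ^ n))ˣ :=
  Units.map (PadicInt.toZModPow (p := p) n).toMonoidHom

lemma unitsRed_eq_iff (p : ℕ) [Fact p.Prime] (n : ℕ) (x y : ℤ_[p]ˣ) :
    unitsRed p n x = unitsRed p n y ↔ ‖(x : ℤ_[p]) - y‖ ≤ (p : ℝ) ^ (-n : ℤ) := by
  rw [← toZModPow_eq_iff, Units.ext_iff]
  rfl

lemma unitsRed_eq_of_succ (p : ℕ) [Fact p.Prime] (n : ℕ) (x y : ℤ_[p]ˣ)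
    (h : unitsRed p (n + 1) x = unitsRed p (n + 1) y) : unitsRed p n x = unitsRed p n y := by
  rw [unitsRed_eq_iff] at *
  refine h.trans (zpow_le_zpow_right₀ ?_ (by push_cast; linarith))
  exact_mod_cast (Fact.out : p.Prime).one_le

lemma unitsRed_isLocallyConstant (p : ℕ) [Fact p.Prime] (n : ℕ) :
    IsLocallyConstant (unitsRed p n) := by
  rw [IsLocallyConstant.iff_exists_open]
  intro x
  refine ⟨Units.val ⁻¹' Metric.ball (x : ℤ_[p]) ((p : ℝ) ^ (-n : ℤ)),
    Metric.isOpen_ball.preimage Units.continuous_val, ?_, ?_⟩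
  · have : (0 : ℝ) < p := by exact_mod_cast (Fact.out : p.Prime).pos
    exact Metric.mem_ball_self (by positivity)
  · intro y hy
    rw [unitsRed_eq_iff, ← dist_eq_norm]
    exact (Metric.mem_ball.1 hy).le

lemma unitsRed_surjective (p : ℕ) [Fact p.Prime] (n : ℕ) (hn : 0 < n) :
    Function.Surjective (unitsRed p n) := by
  have : Fact (1 < p ^ n) := ⟨Nat.one_lt_pow hn.ne' (Fact.out : p.Prime).one_lt⟩
  have hs : Function.Surjective (PadicInt.toZModPow (p := p) n) := ZMod.ringHom_surjective _
  have : IsLocalHom (PadicInt.toZModPow (p := p) n) := hs.isLocalHom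
  exact IsLocalRing.surjective_units_map_of_local_ringHom _ hs this

/-- A dense cyclic subgroup of `ℤ_pˣ` meets every residue class of units. -/
lemma exists_pow_red (p : ℕ) [Fact p.Prime] (g : ℤ_[p]ˣ)
    (hg : Dense ((Subgroup.zpowers g : Subgroup ℤ_[p]ˣ) : Set ℤ_[p]ˣ)) (n : ℕ) (x : ℤ_[p]ˣ) :
    ∃ k : ℕ, unitsRed p n g ^ k = unitsRed p n x := by
  have : NeZero (p ^ n) := ⟨pow_ne_zero _ (Fact.out : p.Prime).ne_zero⟩
  obtain ⟨y, hy, ⟨k, rfl⟩⟩ := hg.inter_open_nonempty _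
    ((unitsRed_isLocallyConstant p n).isOpen_fiber (unitsRed p n x)) ⟨x, rfl⟩
  have h : unitsRed p n x ∈ Subgroup.zpowers (unitsRed p n g) :=
    ⟨k, by simpa using hy⟩
  exact mem_powers_iff_mem_zpowers.2 h

lemma orderOf_red (p : ℕ) [Fact p.Prime] (g : ℤ_[p]ˣ)
    (hg : Dense ((Subgroup.zpowers g : Subgroup ℤ_[p]ˣ) : Set ℤ_[p]ˣ)) (n : ℕ) (hn : 0 < n) :
    orderOf (unitsRed p n g) = p ^ (n - 1) * (p - 1) := by
  have : NeZero (p ^ n) := ⟨pow_ne_zero _ (Fact.out : p.Prime).ne_zero⟩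
  rw [← Nat.totient_prime_pow (Fact.out : p.Prime) hn, ← ZMod.card_units_eq_totient,
    ← Nat.card_eq_fintype_card]
  refine orderOf_eq_card_of_forall_mem_powers fun u => ?_
  obtain ⟨x, rfl⟩ := unitsRed_surjective p n hn u
  exact exists_pow_red p g hg n x

/-- A locally constant function on the compact group `ℤ_pˣ` factors through some `(ℤ/pⁿ)ˣ`. -/
lemma exists_level (p : ℕ) [Fact p.Prime] (K : Type*) [TopologicalSpace K] [DiscreteTopology K]
    (h : C(ℤ_[p]ˣ, K)) :
    ∃ n : ℕ, 0 < n ∧ ∀ x y : ℤ_[p]ˣ, unitsRed p n x = unitsRed p n y → h x = h y := by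
  obtain ⟨δ, hδ, H⟩ := lebesgue_number_lemma_of_metric
    (s := Set.range (Units.val : ℤ_[p]ˣ → ℤ_[p])) (c := fun k : K => Units.val '' (h ⁻¹' {k}))
    (isCompact_range Units.continuous_val)
    (fun k => Units.isOpenEmbedding_val.isOpenMap _
      ((isOpen_discrete {k}).preimage h.continuous))
    (by rintro _ ⟨x, rfl⟩; exact Set.mem_iUnion.2 ⟨h x, x, rfl, rfl⟩)
  obtain ⟨m, hm⟩ := PadicInt.exists_pow_neg_lt p hδ
  have hlt : ∀ x y : ℤ_[p]ˣ, unitsRed p (m + 1) x = unitsRed p (m + 1) y →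
      (y : ℤ_[p]) ∈ Metric.ball (x : ℤ_[p]) δ := by
    intro x y hxy
    rw [Metric.mem_ball, dist_comm, dist_eq_norm]
    exact ((unitsRed_eq_iff p m x y).1 (unitsRed_eq_of_succ p m x y hxy)).trans_lt hm
  refine ⟨m + 1, m.succ_pos, fun x y hxy => ?_⟩
  obtain ⟨k, hk⟩ := H x ⟨x, rfl⟩
  obtain ⟨x', hx', ex⟩ := hk (hlt x x rfl)
  obtain ⟨y', hy', ey⟩ := hk (hlt x y hxy)
  rw [← Units.ext ex, ← Units.ext ey]
  exact hx'.trans hy'.symm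


/-- Let `p` be an odd prime, `g ∈ ℤ_pˣ` a topological generator, `K` a discrete commutative
ring of characteristic `p`, and `γ ∈ K` with `γ^(p−1) = 1`.  Then the `K`-linear map `T` on
`C(ℤ_pˣ, K)` defined by `(T f)(x) = f(g·x) − γ·f(x)` is surjective. -/
theorem stmt5 (p : ℕ) [Fact p.Prime] (hodd : Odd p) (g : ℤ_[p]ˣ)
    (hg : Dense ((Subgroup.zpowers g : Subgroup ℤ_[p]ˣ) : Set ℤ_[p]ˣ))
    (K : Type*) [CommRing K] [TopologicalSpace K] [DiscreteTopology K]
    (hchar : (p : K) = 0) (γ : K) (hγ : γ ^ (p - 1) = 1) :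
    Function.Surjective (fun f : C(ℤ_[p]ˣ, K) =>
      (⟨fun x => f (g * x) - γ * f x,
        ((f.continuous.comp (continuous_mul_left g)).sub
          (continuous_const.mul f.continuous))⟩ : C(ℤ_[p]ˣ, K))) := by
  intro h
  obtain ⟨n, hn, hh⟩ := exists_level p K h
  set N := p ^ (n - 1) * (p - 1) with hN
  have hγN : γ ^ N = 1 := by rw [hN, mul_comm, pow_mul, hγ, one_pow]
  have hord : orderOf (unitsRed p (n + 1) g) = p * N := by
    rw [orderOf_red p g hg (n + 1) n.succ_pos, hN, Nat.add_sub_cancel, ← mul_assoc,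
      ← pow_succ', Nat.sub_add_cancel hn]
  have ha : ∀ k : ℕ, h (g ^ (k + N)) = h (g ^ k) := by
    intro k
    apply hh
    rw [map_pow, map_pow, pow_add, hN, ← orderOf_red p g hg n hn, pow_orderOf_eq_one, mul_one]
  set F := recSol γ (fun k => h (g ^ k)) with hF
  have hper : Function.Periodic F (p * N) := recSol_periodic γ _ N p ha hγN hchar
  have hwell : ∀ k l : ℕ, unitsRed p (n + 1) g ^ k = unitsRed p (n + 1) g ^ l → F k = F l := by
    intro k l hkl
    have hmod : k % (p * N) = l % (p * N) := by
      rw [← hord]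
      exact pow_eq_pow_iff_modEq.1 hkl
    rw [← hper.map_mod_nat k, hmod, hper.map_mod_nat]
  choose ind hind using exists_pow_red p g hg (n + 1)
  have hloc : IsLocallyConstant (fun x => F (ind x)) := by
    rw [IsLocallyConstant.iff_exists_open]
    intro x
    refine ⟨_, (unitsRed_isLocallyConstant p (n + 1)).isOpen_fiber (unitsRed p (n + 1) x),
      rfl, fun y hy => hwell _ _ ?_⟩
    rw [hind, hind]
    exact hy
  refine ⟨⟨fun x => F (ind x), hloc.continuous⟩, ?_⟩
  ext x
  change F (ind (g * x)) - γ * F (ind x) = h x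
  have h1 : F (ind (g * x)) = F (ind x + 1) := by
    apply hwell
    rw [hind, map_mul, pow_succ (unitsRed p (n + 1) g), hind, mul_comm]
  have h2 : h (g ^ ind x) = h x :=
    hh _ _ (unitsRed_eq_of_succ p n _ _ (by rw [map_pow, hind]))
  rw [h1, hF, recSol, h2]
  ring
end

section
/- Let p be a prime, let ℤ_pˣ-as-a-subspace mean the subtype {x : ℤ_p // IsUnit x} with the subspace topology, and let f₀ ∈ C(ℤ_p, ZMod p) be the 0-th digit function x ↦ x mod p (i.e., PadicInt.toZMod, continuous with ZMod p discrete). Then the restriction ring homomorphism C(ℤ_p, ZMod p) → C({x : ℤ_p // IsUnit x}, ZMod p) exhibits the target as the localization of C(ℤ_p, ZMod p) away from f₀; that is, IsLocalization.Away f₀ C({x : ℤ_p // IsUnit x}, ZMod p) holds for this algebra structure. -/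
/-!
The digit `x mod p` of a `p`-adic integer vanishes exactly off the units
(`toZMod_ne_zero_iff`), and the units form a clopen subset of `ℤ_p` (`isClopen_isUnit`).
Hence `f₀` restricts to a nowhere vanishing, so invertible, function on the units; every
continuous function on the units extends by zero to `ℤ_p` (`restrictUnits_surjective`); and
two functions agreeing on the units become equal after multiplication by `f₀`, which
vanishes elsewhere. These are the three conditions characterising the localization.
-/

/-- The reduction `PadicInt.toZMod : ℤ_p → ZMod p` is continuous (`ZMod p` discrete). -/
theorem continuous_padicToZMod (p : ℕ) [Fact p.Prime] :
    Continuous (PadicInt.toZMod : ℤ_[p] → ZMod p) := by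
  have h : IsLocallyConstant (PadicInt.toZMod : ℤ_[p] → ZMod p) := by
    rw [IsLocallyConstant.iff_exists_open]
    intro x
    refine ⟨Metric.ball x 1, Metric.isOpen_ball, Metric.mem_ball_self one_pos,
      fun y hy => ?_⟩
    have hdvd : (p : ℤ_[p]) ∣ (y - x) := by
      rw [← PadicInt.norm_lt_one_iff_dvd]
      simpa [dist_eq_norm] using hy
    have hker : (y - x) ∈ RingHom.ker (PadicInt.toZMod : ℤ_[p] →+* ZMod p) := by
      rw [PadicInt.ker_toZMod, PadicInt.maximalIdeal_eq_span_p, Ideal.mem_span_singleton]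
      exact hdvd
    have h0 : PadicInt.toZMod y - PadicInt.toZMod x = 0 := by
      rw [← map_sub]
      exact RingHom.mem_ker.mp hker
    exact sub_eq_zero.mp h0
  exact h.continuous

/-- The `0`-th digit function `f₀ : ℤ_p → ZMod p`, i.e. reduction mod `p`, as a continuous
map. -/
noncomputable def digitZero (p : ℕ) [Fact p.Prime] : C(ℤ_[p], ZMod p) :=
  ⟨fun x => PadicInt.toZMod x, continuous_padicToZMod p⟩

/-- Restriction along the inclusion `ℤ_pˣ ⊆ ℤ_p`, as a ring homomorphism
`C(ℤ_p, ZMod p) →+* C(ℤ_pˣ, ZMod p)` (units viewed as the subspace of unit elements). -/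
noncomputable def restrictUnits (p : ℕ) [Fact p.Prime] :
    C(ℤ_[p], ZMod p) →+* C({x : ℤ_[p] // IsUnit x}, ZMod p) where
  toFun f := f.comp ⟨Subtype.val, continuous_subtype_val⟩
  map_one' := rfl
  map_mul' _ _ := rfl
  map_zero' := rfl
  map_add' _ _ := rfl

theorem toZMod_ne_zero_iff (p : ℕ) [Fact p.Prime] (x : ℤ_[p]) :
    PadicInt.toZMod x ≠ 0 ↔ IsUnit x := by
  rw [Ne, ← RingHom.mem_ker, PadicInt.ker_toZMod, IsLocalRing.mem_maximalIdeal,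
    mem_nonunits_iff, not_not]

theorem isClopen_isUnit (p : ℕ) [Fact p.Prime] : IsClopen {x : ℤ_[p] | IsUnit x} := by
  have h : {x : ℤ_[p] | IsUnit x} = PadicInt.toZMod ⁻¹' ({0}ᶜ : Set (ZMod p)) := by
    ext x
    exact (toZMod_ne_zero_iff p x).symm
  rw [h]
  exact (isClopen_discrete _).preimage (continuous_padicToZMod p)

theorem restrictUnits_surjective (p : ℕ) [Fact p.Prime] :
    Function.Surjective (restrictUnits p) := by
  classical
  intro g
  have hS := isClopen_isUnit p
  refine ⟨⟨fun x => if h : IsUnit x then g ⟨x, h⟩ else 0, ?_⟩, ?_⟩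
  · rw [continuous_iff_continuousAt]
    intro x
    by_cases hx : IsUnit x
    -- Near a unit, the extension is `g` read through the open embedding of the units.
    · have he : Topology.IsOpenEmbedding (Subtype.val : {x : ℤ_[p] // IsUnit x} → ℤ_[p]) :=
        hS.isOpen.isOpenEmbedding_subtypeVal
      have h := he.continuousAt_iff (x := ⟨x, hx⟩)
        (g := fun x : ℤ_[p] => if h : IsUnit x then g ⟨x, h⟩ else 0)
      refine h.1 ?_
      convert g.continuous.continuousAt using 1
      funext y
      exact dif_pos y.2
    · refine (continuousAt_const (y := (0 : ZMod p))).congr ?_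
      filter_upwards [hS.compl.isOpen.mem_nhds hx] with y hy
      have hyu : ¬ IsUnit y := hy
      rw [dif_neg hyu]
  · ext y
    exact dif_pos y.2

theorem isUnit_restrictUnits_digitZero (p : ℕ) [Fact p.Prime] :
    IsUnit (restrictUnits p (digitZero p)) := by
  refine IsUnit.of_mul_eq_one
    ⟨fun x => (restrictUnits p (digitZero p) x)⁻¹,
      continuous_of_discreteTopology.comp (restrictUnits p (digitZero p)).continuous⟩ ?_
  ext x
  exact mul_inv_cancel₀ ((toZMod_ne_zero_iff p x.1).2 x.2)

/-- `C(ℤ_pˣ, ZMod p)`, with its algebra structure given by restriction of continuous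
functions, is the localization of `C(ℤ_p, ZMod p)` away from the `0`-th digit function
`f₀ = (· mod p)`. -/
theorem stmt11 (p : ℕ) [Fact p.Prime] :
    letI : Algebra C(ℤ_[p], ZMod p) C({x : ℤ_[p] // IsUnit x}, ZMod p) :=
      (restrictUnits p).toAlgebra
    IsLocalization.Away (digitZero p) C({x : ℤ_[p] // IsUnit x}, ZMod p) := by
  let : Algebra C(ℤ_[p], ZMod p) C({x : ℤ_[p] // IsUnit x}, ZMod p) :=
    (restrictUnits p).toAlgebra
  refine (isLocalization_iff _ _).2 ⟨?_, ?_, ?_⟩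
  · rintro ⟨_, n, rfl⟩
    change IsUnit (restrictUnits p (digitZero p ^ n))
    rw [map_pow]
    exact (isUnit_restrictUnits_digitZero p).pow n
  · intro z
    obtain ⟨f, hf⟩ := restrictUnits_surjective p z
    refine ⟨(f, 1), ?_⟩
    change z * restrictUnits p 1 = restrictUnits p f
    rw [map_one, mul_one, hf]
  · intro f g hfg
    replace hfg : restrictUnits p f = restrictUnits p g := hfg
    refine ⟨⟨digitZero p, Submonoid.mem_powers _⟩, ?_⟩
    ext x
    change PadicInt.toZMod x * f x = PadicInt.toZMod x * g x
    by_cases hx : IsUnit x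
    · have h : f x = g x := DFunLike.congr_fun hfg ⟨x, hx⟩
      rw [h]
    · rw [not_not.1 (mt (toZMod_ne_zero_iff p x).1 hx), zero_mul, zero_mul]
end
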